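/- Let A be a Hopf algebra over a field k, let r ∈ A be a grouplike element, let χ : A → k be a character, define τ : A → A by τ(a) = χ(a₍₁₎) a₍₂₎, and assume χ(a₍₁₎) a₍₂₎ = r a₍₁₎ S(r) χ(a₍₂₎) for all a ∈ A. Let δ : A → A be a τ-derivation satisfying Δ(δ(a)) = δ(a₍₁₎) ⊗ a₍₂₎ + r a₍₁₎ ⊗ δ(a₍₂₎) for all a ∈ A. Then χ(a₍₁₎) δ(S(a₍₂₎)) = r S(δ(a)) for all a ∈ A; equivalently δ(S(τ(a))) = r S(δ(a)). -/

import Mathlib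

open TensorProduct

/-!
Everything happens in the convolution ring of linear endomorphisms of `A`, where `S` is the inverse
of `id`. Applying `δ` on either side of `id * S = 1` kills the right-hand side, as `δ 1 = 0` and
`ε ∘ δ = 0`, while the Leibniz and co-Leibniz rules expand the left-hand side, giving
`δ * S + τ * (δ ∘ S) = 0 = δ * S + r id * (S ∘ δ)`. Hence `τ * (δ ∘ S) = r id * (S ∘ δ)`. By
hypothesis `τ = r id r⁻¹ * χ`, with elements of `A` acting as constants in the convolution ring, so
cancelling the unit `r id` leaves `r⁻¹ χ * (δ ∘ S) = S ∘ δ`.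
-/

open Coalgebra HopfAlgebra WithConv

lemma apply_lid_rTensor {R M N P : Type*} [CommSemiring R] [AddCommMonoid M] [Module R M]
    [AddCommMonoid N] [Module R N] [AddCommMonoid P] [Module R P]
    (f : N →ₗ[R] P) (χ : M →ₗ[R] R) (x : M ⊗[R] N) :
    f (TensorProduct.lid R N (χ.rTensor N x)) =
      TensorProduct.lid R P (TensorProduct.map χ f x) := by
  induction x with
  | zero => simp
  | tmul m n => simp
  | add x y hx hy => simp only [map_add, hx, hy]

section Convolution

variable {R A C : Type*} [CommSemiring R] [Semiring A] [Algebra R A]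
  [AddCommMonoid C] [Module R C]

lemma algebraLinearMap_comp_convMul_apply [CoalgebraStruct R C] (χ : C →ₗ[R] R) (f : C →ₗ[R] A)
    (c : C) :
    (toConv (Algebra.linearMap R A ∘ₗ χ) * toConv f) c =
      TensorProduct.lid R A (TensorProduct.map χ f (comul c)) := by
  simp [(ℛ R c).convMul_apply, ← (ℛ R c).eq, Algebra.smul_def]

lemma convMul_algebraLinearMap_comp_apply [CoalgebraStruct R C] (f : C →ₗ[R] A) (χ : C →ₗ[R] R)
    (c : C) :
    (toConv f * toConv (Algebra.linearMap R A ∘ₗ χ)) c =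
      TensorProduct.rid R A (TensorProduct.map f χ (comul c)) := by
  simp [(ℛ R c).convMul_apply, ← (ℛ R c).eq, Algebra.smul_def, Algebra.commutes]

variable [Coalgebra R C]

variable (R C) in
/-- The element `a` of an algebra regarded as the constant `c ↦ ε(c) a` of the convolution ring
`C → A`. Convolving with it is pointwise multiplication by `a`. -/
def convConst : A →* WithConv (C →ₗ[R] A) where
  toFun a := toConv (LinearMap.toSpanSingleton R A a ∘ₗ counit)
  map_one' := by
    ext c
    simp [Algebra.algebraMap_eq_smul_one]
  map_mul' a b := by
    ext c
    simp [← LinearMap.map_comp_rTensor]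

lemma convConst_mul_toConv (a : A) (f : C →ₗ[R] A) :
    convConst R C a * toConv f = toConv (LinearMap.mulLeft R a ∘ₗ f) := by
  ext c
  simp [convConst, ← LinearMap.map_comp_rTensor]

lemma toConv_mul_convConst (f : C →ₗ[R] A) (a : A) :
    toConv f * convConst R C a = toConv (LinearMap.mulRight R a ∘ₗ f) := by
  ext c
  simp [convConst, ← LinearMap.map_comp_lTensor]

end Convolution

section Antipode

variable {R A : Type*} [CommSemiring R] [Semiring A] [HopfAlgebra R A]

lemma antipode_convMul_id : toConv (antipode R) * toConv (LinearMap.id : A →ₗ[R] A) = 1 :=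
  WithConv.ext mul_antipode_rTensor_comul

lemma id_convMul_antipode : toConv (LinearMap.id : A →ₗ[R] A) * toConv (antipode R) = 1 :=
  WithConv.ext mul_antipode_lTensor_comul

lemma isUnit_toConv_id : IsUnit (toConv (LinearMap.id : A →ₗ[R] A)) :=
  isUnit_iff_exists.2 ⟨_, id_convMul_antipode, antipode_convMul_id⟩

end Antipode

/-- `δ` is a `τ`-derivation of the algebra `A`: it satisfies the Leibniz rule twisted by `τ`, which
is only required to be linear. -/
def IsSkewDerivation {R A : Type*} [CommSemiring R] [Semiring A] [Algebra R A]
    (τ δ : A →ₗ[R] A) : Prop :=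
  ∀ a b, δ (a * b) = δ a * b + τ a * δ b

namespace IsSkewDerivation

variable {R A C : Type*} [CommSemiring R]

lemma comp_convMul [Semiring A] [Algebra R A] [AddCommMonoid C] [Module R C] [CoalgebraStruct R C]
    {τ δ : A →ₗ[R] A} (hδ : IsSkewDerivation τ δ) (f g : C →ₗ[R] A) :
    toConv (δ ∘ₗ (toConv f * toConv g).ofConv) =
      toConv (δ ∘ₗ f) * toConv g + toConv (τ ∘ₗ f) * toConv (δ ∘ₗ g) := by
  ext c
  simp [(ℛ R c).convMul_apply, hδ _ _, Finset.sum_add_distrib]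

variable [Ring A] [Algebra R A] {τ δ : A →ₗ[R] A}

lemma apply_one_eq_zero (hδ : IsSkewDerivation τ δ) (hτ : τ 1 = 1) : δ 1 = 0 := by
  simpa [hτ] using hδ 1 1

lemma comp_convOne [AddCommMonoid C] [Module R C] [Coalgebra R C]
    (hδ : IsSkewDerivation τ δ) (hτ : τ 1 = 1) :
    toConv (δ ∘ₗ (1 : WithConv (C →ₗ[R] A)).ofConv) = 0 := by
  ext c
  simp [LinearMap.convOne_def, Algebra.algebraMap_eq_smul_one, hδ.apply_one_eq_zero hτ]

end IsSkewDerivation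

/-- `δ` is a `ρ`-coderivation of the coalgebra `C`, the notion dual to that of a `τ`-derivation:
`Δ(δ c) = δ(c₍₁₎) ⊗ c₍₂₎ + ρ(c₍₁₎) ⊗ δ(c₍₂₎)`. -/
def IsSkewCoderivation {R C : Type*} [CommSemiring R] [AddCommMonoid C] [Module R C]
    [CoalgebraStruct R C] (ρ δ : C →ₗ[R] C) : Prop :=
  ∀ c, comul (R := R) (δ c) =
    TensorProduct.map δ LinearMap.id (comul c) + TensorProduct.map ρ δ (comul c)

namespace IsSkewCoderivation

variable {R A C : Type*} [CommSemiring R] [AddCommMonoid C] [Module R C]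

lemma convMul_comp [CoalgebraStruct R C] {ρ δ : C →ₗ[R] C} [Semiring A] [Algebra R A]
    (hδ : IsSkewCoderivation ρ δ) (f g : C →ₗ[R] A) :
    toConv ((toConv f * toConv g).ofConv ∘ₗ δ) =
      toConv (f ∘ₗ δ) * toConv g + toConv (f ∘ₗ ρ) * toConv (g ∘ₗ δ) := by
  ext c
  simp [hδ c, TensorProduct.map_map]

lemma convOne_comp [Coalgebra R C] {ρ δ : C →ₗ[R] C} [Ring A] [Algebra R A]
    (hδ : IsSkewCoderivation ρ δ) (hρ : counit ∘ₗ ρ = counit (R := R)) :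
    toConv ((1 : WithConv (C →ₗ[R] A)).ofConv ∘ₗ δ) = 0 := by
  -- Composing `1 * 1 = 1` with `δ` gives `1 ∘ δ + 1 ∘ δ = 1 ∘ δ`.
  have expand := hδ.convMul_comp (A := A) (1 : WithConv (C →ₗ[R] A)).ofConv
    (1 : WithConv (C →ₗ[R] A)).ofConv
  have one_comp : toConv ((1 : WithConv (C →ₗ[R] A)).ofConv ∘ₗ ρ) = 1 := by
    rw [LinearMap.convOne_def, ofConv_toConv, LinearMap.comp_assoc, hρ]
  simpa [one_comp] using expand

end IsSkewCoderivation

section HopfAlgebra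

variable {R A : Type*} [CommSemiring R] [Ring A] [HopfAlgebra R A]

theorem IsSkewDerivation.convMul_comp_antipode_eq_convMul_antipode_comp {τ ρ δ : A →ₗ[R] A}
    (hder : IsSkewDerivation τ δ) (hτ : τ 1 = 1)
    (hcoder : IsSkewCoderivation ρ δ) (hρ : counit ∘ₗ ρ = counit (R := R)) :
    toConv τ * toConv (δ ∘ₗ antipode R) = toConv ρ * toConv (antipode R ∘ₗ δ) := by
  have leibniz : toConv δ * toConv (antipode R) + toConv τ * toConv (δ ∘ₗ antipode R) = 0 := by
    rw [← hder.comp_convOne hτ, ← id_convMul_antipode]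
    exact (hder.comp_convMul LinearMap.id (antipode R)).symm
  have coleibniz : toConv δ * toConv (antipode R) + toConv ρ * toConv (antipode R ∘ₗ δ) = 0 := by
    rw [← hcoder.convOne_comp hρ, ← id_convMul_antipode]
    exact (hcoder.convMul_comp LinearMap.id (antipode R)).symm
  exact add_left_cancel (leibniz.trans coleibniz.symm)

theorem IsSkewDerivation.convMul_comp_antipode_eq_mulLeft_comp {r : A} (hr : IsGroupLikeElem R r)
    {τ δ : A →ₗ[R] A} {f : WithConv (A →ₗ[R] A)} (hτ : τ 1 = 1)
    (hcomm : toConv τ = toConv (LinearMap.mulLeftRight R (r, antipode R r)) * f)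
    (hder : IsSkewDerivation τ δ) (hcoder : IsSkewCoderivation (LinearMap.mulLeft R r) δ) :
    f * toConv (δ ∘ₗ antipode R) = toConv (LinearMap.mulLeft R r ∘ₗ antipode R ∘ₗ δ) := by
  have counit_mulLeft : counit ∘ₗ LinearMap.mulLeft R r = counit (R := R) := by
    ext a
    simp [hr]
  have mulLeft_eq : toConv (LinearMap.mulLeft R r) = convConst R A r * toConv LinearMap.id :=
    (convConst_mul_toConv r LinearMap.id).symm
  have conj_eq : toConv (LinearMap.mulLeftRight R (r, antipode R r)) =
      toConv (LinearMap.mulLeft R r) * convConst R A (antipode R r) :=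
    (toConv_mul_convConst (LinearMap.mulLeft R r) (antipode R r)).symm
  have isUnit_mulLeft : IsUnit (toConv (LinearMap.mulLeft R r)) :=
    mulLeft_eq ▸ (hr.isUnit.map (convConst R A)).mul isUnit_toConv_id
  have cancelled : convConst R A (antipode R r) * (f * toConv (δ ∘ₗ antipode R)) =
      toConv (antipode R ∘ₗ δ) := by
    rw [← isUnit_mulLeft.mul_right_inj, ← mul_assoc, ← mul_assoc, ← conj_eq, ← hcomm]
    exact hder.convMul_comp_antipode_eq_convMul_antipode_comp hτ hcoder counit_mulLeft
  rw [← convConst_mul_toConv, ← cancelled, ← mul_assoc, ← map_mul, hr.mul_antipode_cancel,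
    map_one, one_mul]

theorem chi_delta_antipode_formula_general {r : A} (hr : IsGroupLikeElem R r)
    {χ : A →ₗ[R] R} (hχ : χ 1 = 1) {τ δ : A →ₗ[R] A}
    (hτ : ∀ a, τ a = TensorProduct.lid R A (χ.rTensor A (comul a)))
    (hcomm : ∀ a, τ a = TensorProduct.rid R A
      (TensorProduct.map (LinearMap.mulLeftRight R (r, antipode R r)) χ (comul a)))
    (hder : IsSkewDerivation τ δ) (hcoder : IsSkewCoderivation (LinearMap.mulLeft R r) δ) (a : A) :
    TensorProduct.lid R A (TensorProduct.map χ (δ ∘ₗ antipode R) (comul a)) =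
        r * antipode R (δ a) ∧
      δ (antipode R (τ a)) = r * antipode R (δ a) := by
  have tau_one : τ 1 = 1 := by simp [hτ, Algebra.TensorProduct.one_def, hχ]
  have tau_eq : toConv τ = toConv (LinearMap.mulLeftRight R (r, antipode R r)) *
      toConv (Algebra.linearMap R A ∘ₗ χ) := by
    ext b
    exact (hcomm b).trans (convMul_algebraLinearMap_comp_apply _ _ b).symm
  have formula : TensorProduct.lid R A (TensorProduct.map χ (δ ∘ₗ antipode R) (comul a)) =
      r * antipode R (δ a) := by
    rw [← algebraLinearMap_comp_convMul_apply,
      hder.convMul_comp_antipode_eq_mulLeft_comp hr tau_one tau_eq hcoder]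
    rfl
  refine ⟨formula, ?_⟩
  rw [← formula, hτ]
  exact apply_lid_rTensor (δ ∘ₗ antipode R) χ (comul a)

end HopfAlgebra

/-- Let `r` be a grouplike element of a Hopf algebra `A` over a field `k`,
`χ : A → k` a character, `τ a = χ(a₍₁₎) a₍₂₎`, and assume
`χ(a₍₁₎) a₍₂₎ = r a₍₁₎ S(r) χ(a₍₂₎)` for all `a`.  Let `δ` be a `τ`-derivation with
`Δ(δ a) = δ(a₍₁₎) ⊗ a₍₂₎ + r a₍₁₎ ⊗ δ(a₍₂₎)`.  Then
`χ(a₍₁₎) δ(S(a₍₂₎)) = r S(δ a)` for all `a`; equivalently `δ(S(τ a)) = r S(δ a)`. -/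
theorem chi_delta_antipode_formula
    {k A : Type*} [Field k] [Ring A] [HopfAlgebra k A]
    (r : A)
    (hr : Coalgebra.comul (R := k) r = r ⊗ₜ[k] r)
    (hrε : Coalgebra.counit (R := k) r = 1)
    (χ : A →ₐ[k] k)
    -- `Ad_r : a ↦ r * a * S(r)` as a linear map
    (Ad : A →ₗ[k] A)
    (hAd : ∀ a : A, Ad a = r * a * HopfAlgebra.antipode (R := k) r)
    -- `τ a = χ(a₍₁₎) a₍₂₎` as a linear map
    (τ : A →ₗ[k] A)
    (hτ : ∀ a : A, τ a = (TensorProduct.lid k A)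
      ((LinearMap.rTensor A χ.toLinearMap) (Coalgebra.comul (R := k) a)))
    -- assumption: `χ(a₍₁₎) a₍₂₎ = r a₍₁₎ S(r) χ(a₍₂₎)`
    (hcomm : ∀ a : A, τ a = (TensorProduct.rid k A)
      ((TensorProduct.map Ad χ.toLinearMap) (Coalgebra.comul (R := k) a)))
    (δ : A →ₗ[k] A)
    -- `δ` is a `τ`-derivation
    (hder : ∀ a b : A, δ (a * b) = δ a * b + τ a * δ b)
    -- `Δ(δ a) = δ(a₍₁₎) ⊗ a₍₂₎ + r a₍₁₎ ⊗ δ(a₍₂₎)`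
    (hδ : ∀ a : A, Coalgebra.comul (R := k) (δ a) =
      (TensorProduct.map δ (LinearMap.id : A →ₗ[k] A)) (Coalgebra.comul (R := k) a) +
      (TensorProduct.map (LinearMap.mulLeft k r) δ) (Coalgebra.comul (R := k) a)) :
    ∀ a : A,
      (TensorProduct.lid k A) ((TensorProduct.map χ.toLinearMap
          (δ ∘ₗ (HopfAlgebra.antipode (R := k)))) (Coalgebra.comul (R := k) a)) =
        r * HopfAlgebra.antipode (R := k) (δ a) ∧
      δ (HopfAlgebra.antipode (R := k) (τ a)) =
        r * HopfAlgebra.antipode (R := k) (δ a) := by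
  obtain rfl : Ad = LinearMap.mulLeftRight k (r, HopfAlgebra.antipode k r) := LinearMap.ext hAd
  exact chi_delta_antipode_formula_general ⟨hrε, hr⟩ (map_one χ) hτ hcomm hder hδ
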